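/- Let q be a real number with 0 < q and q ≠ 1, let h₁, l₁, l₂, α₁, λ be real numbers and t₁, t₂ nonzero reals. Assume λ + α₁ = -N for some positive integer N (so (q^{λ+α₁};q)_n = 0 for all n > N and the series below is a finite sum), and assume q^{h₁-l₁+n} ≠ 1 and q^{h₁-l₂+n}·t₁/t₂ ≠ 1 for all integers 1 ≤ n ≤ N. Then the function g(x) = x^{λ} · Σ_{n=0}^{N} (q^{h₁+1/2}t₁/x;q)_n · (q^{λ+α₁};q)_n · q^{n(n-1)/2} · (-q^{-λ-α₁-l₁-l₂+h₁+3/2}·x/t₂)^n / ((q^{h₁-l₁+1};q)_n (q^{h₁-l₂+1}·t₁/t₂;q)_n (q;q)_n) satisfies the variant of the confluent q-hypergeometric equation of type (2,1) for all x > 0. -/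

import Mathlib

/-- The finite q-shifted factorial `(a;q)_n = ∏_{i=0}^{n-1} (1 - a q^i)`. -/
noncomputable def qPoch (q a : ℝ) (n : ℕ) : ℝ :=
  ∏ i ∈ Finset.range n, (1 - a * q ^ i)

/-- The variant of the confluent q-hypergeometric equation of type (2,1) (for `x > 0`). -/
def confEq21 (q h₁ l₁ l₂ α₁ lam t₁ t₂ : ℝ) (g : ℝ → ℝ) : Prop :=
  ∀ x : ℝ, 0 < x →
    (x - q ^ (l₁ - 1/2) * t₁) * (x - q ^ (l₂ - 1/2) * t₂) * g (q * x)
    - q ^ (-h₁ + l₁ + l₂ + 2 * lam - 1/2) * t₂ * (x - q ^ (h₁ + 1/2) * t₁) * g (x / q)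
    - (q ^ (-α₁) * x ^ 2
        - q ^ (l₁ + l₂ + lam - 1/2) * (q ^ (-l₂) * t₁ + (q ^ (-h₁) + q ^ (-l₁)) * t₂) * x
        + q ^ (l₁ + l₂ + lam) * (1 + q⁻¹) * t₁ * t₂) * g x = 0

/-!
Put `a = q^(h₁+1/2) t₁`, `b = q^(l₁-1/2) t₁`, `c = q^(l₂-1/2) t₂`, `u = q^(-λ-α₁)`. Conjugation by
`x^λ` turns the equation into `L f = 0` for a `q`-difference operator `L` that depends only on
`q, a, b, c, u`. On the basis `P_n(x) = ∏_{i<n} (x - a q^i)` the operator is bidiagonal up to the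
factor `x²`: `L P_n` is a combination of `x² P_n`, with coefficient `q^n - u`, and `x² P_{n-1}`.
Hence, if the coefficients `d_n` satisfy the resulting two-term recurrence, `L (∑_{n≤m} d_n P_n)`
telescopes to `(q^m - u) d_m x² P_m`. The series of the theorem is of this form, and for
`λ + α₁ = -N` we have `u = q^N`, so that the remainder vanishes at `m = N`.
-/

section ShiftedPower

/-- The `q`-shifted power `∏_{i<n} (y - a q^i)`, the basis in which the solution is expanded.
For `y ≠ 0` it equals `y^n (a/y;q)_n`; the product form needs no division. -/
def qShiftedPow {R : Type*} [CommRing R] (q a : R) (n : ℕ) (y : R) : R :=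
  ∏ i ∈ Finset.range n, (y - a * q ^ i)

variable {R : Type*} [CommRing R] (q a : R)

theorem qShiftedPow_zero (y : R) : qShiftedPow q a 0 y = 1 := Finset.prod_range_zero _

theorem qShiftedPow_succ (n : ℕ) (y : R) :
    qShiftedPow q a (n + 1) y = qShiftedPow q a n y * (y - a * q ^ n) :=
  Finset.prod_range_succ _ _

theorem qShiftedPow_succ_mul (n : ℕ) (x : R) :
    qShiftedPow q a (n + 1) (q * x) = q ^ n * (q * x - a) * qShiftedPow q a n x := by
  induction n with
  | zero => simp [qShiftedPow_succ, qShiftedPow_zero]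
  | succ n ih => rw [qShiftedPow_succ, ih, qShiftedPow_succ q a n x]; ring

theorem pow_mul_sub_mul_qShiftedPow_div {K : Type*} [Field K] {q : K} (hq : q ≠ 0) (a : K) (n : ℕ)
    (x : K) : q ^ n * ((x - a) * qShiftedPow q a n (x / q)) = qShiftedPow q a (n + 1) x := by
  have h := qShiftedPow_succ_mul q a n (x / q)
  rw [mul_div_cancel₀ x hq] at h
  rw [h, mul_assoc]

end ShiftedPower

section Operator

variable {K : Type*} [Field K]

/-- The `q`-difference operator `L` obtained from the equation `confEq21` by conjugation with `x^λ`
and division by `q^λ`, in the parameters `a = q^(h₁+1/2) t₁`, `b = q^(l₁-1/2) t₁`,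
`c = q^(l₂-1/2) t₂` and `u = q^(-λ-α₁)`. -/
def confluentOp (q a b c u : K) : (K → K) →ₗ[K] (K → K) where
  toFun f x :=
    (x - b) * (x - c) * f (q * x) - q * b * c / a * (x - a) * f (x / q)
      - (u * x ^ 2 - (b + c + q * b * c / a) * x + b * c * (1 + q)) * f x
  map_add' f g := by ext x; simp only [Pi.add_apply]; ring
  map_smul' k f := by ext x; simp only [Pi.smul_apply, smul_eq_mul, RingHom.id_apply]; ring

theorem confluentOp_apply (q a b c u : K) (f : K → K) (x : K) :
    confluentOp q a b c u f x =
      (x - b) * (x - c) * f (q * x) - q * b * c / a * (x - a) * f (x / q)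
        - (u * x ^ 2 - (b + c + q * b * c / a) * x + b * c * (1 + q)) * f x :=
  rfl

variable {q a : K}

theorem confluentOp_qShiftedPow_zero (ha : a ≠ 0) (b c u x : K) :
    confluentOp q a b c u (qShiftedPow q a 0) x = (1 - u) * x ^ 2 := by
  simp only [confluentOp_apply, qShiftedPow_zero]
  field_simp
  ring

theorem confluentOp_qShiftedPow_succ (hq : q ≠ 0) (ha : a ≠ 0) (b c u : K) (n : ℕ) (x : K) :
    confluentOp q a b c u (qShiftedPow q a (n + 1)) x =
      (q ^ (n + 1) - u) * x ^ 2 * qShiftedPow q a (n + 1) x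
        - (b - a * q ^ n) * (c - a * q ^ n) * (1 - q ^ (n + 1)) / (q ^ n * a) * x ^ 2
          * qShiftedPow q a n x := by
  have hqn : q ^ n ≠ 0 := pow_ne_zero n hq
  have hdiv : (x - a) * qShiftedPow q a (n + 1) (x / q) =
      qShiftedPow q a n x * (x - a * q ^ n) * (x - a * q ^ (n + 1)) / q ^ (n + 1) := by
    rw [eq_div_iff (pow_ne_zero _ hq), mul_comm, pow_mul_sub_mul_qShiftedPow_div hq,
      qShiftedPow_succ, qShiftedPow_succ]
  rw [confluentOp_apply, mul_assoc (q * b * c / a), hdiv, qShiftedPow_succ_mul,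
    qShiftedPow_succ q a n x, pow_succ]
  field_simp
  ring

theorem confluentOp_sum_smul_qShiftedPow (hq : q ≠ 0) (ha : a ≠ 0) {b c u : K} {d : ℕ → K} {m : ℕ}
    (hd : ∀ n < m, d (n + 1) * ((b - a * q ^ n) * (c - a * q ^ n) * (1 - q ^ (n + 1))) =
      d n * ((q ^ n - u) * q ^ n * a)) (x : K) :
    confluentOp q a b c u (∑ n ∈ Finset.range (m + 1), d n • qShiftedPow q a n) x =
      d m * (q ^ m - u) * x ^ 2 * qShiftedPow q a m x := by
  induction m with
  | zero =>
    rw [zero_add, Finset.sum_range_one, map_smul, Pi.smul_apply, smul_eq_mul,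
      confluentOp_qShiftedPow_zero ha, qShiftedPow_zero]
    ring
  | succ m ih =>
    have hcancel : d (m + 1) *
        ((b - a * q ^ m) * (c - a * q ^ m) * (1 - q ^ (m + 1)) / (q ^ m * a)) =
          d m * (q ^ m - u) := by
      rw [← mul_div_assoc, div_eq_iff (mul_ne_zero (pow_ne_zero m hq) ha), hd m m.lt_succ_self]
      ring
    rw [Finset.sum_range_succ, map_add, map_smul, Pi.add_apply, Pi.smul_apply, smul_eq_mul,
      ih fun n hn => hd n (hn.trans m.lt_succ_self), confluentOp_qShiftedPow_succ hq ha]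
    linear_combination (-x ^ 2 * qShiftedPow q a m x) * hcancel

end Operator

section Coefficients

theorem qPoch_succ (q a : ℝ) (n : ℕ) : qPoch q a (n + 1) = qPoch q a n * (1 - a * q ^ n) :=
  Finset.prod_range_succ _ _

theorem qPoch_div_mul_pow (q a : ℝ) (n : ℕ) {y : ℝ} (hy : y ≠ 0) :
    qPoch q (a / y) n * y ^ n = qShiftedPow q a n y := by
  induction n with
  | zero => simp [qPoch, qShiftedPow]
  | succ n ih =>
    rw [qPoch_succ, qShiftedPow_succ, ← ih]
    field_simp
    ring

/-- The coefficient of `qShiftedPow q a n` in the series solution of `L f = 0`, where `L` is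
`confluentOp q a b c u`. The exponent `n(n-1)/2` is encoded as `n.choose 2`. -/
noncomputable def confluentCoeff (q a b c u : ℝ) (n : ℕ) : ℝ :=
  qPoch q u⁻¹ n * q ^ n.choose 2 * (-(u * a / (b * c))) ^ n /
    (qPoch q (a / b) n * qPoch q (a / c) n * qPoch q q n)

theorem confluentCoeff_succ (q a b c u : ℝ) (n : ℕ) :
    confluentCoeff q a b c u (n + 1) = confluentCoeff q a b c u n *
      ((1 - u⁻¹ * q ^ n) * q ^ n * -(u * a / (b * c)) /
        ((1 - a / b * q ^ n) * (1 - a / c * q ^ n) * (1 - q ^ (n + 1)))) := by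
  have hchoose : (n + 1).choose 2 = n + n.choose 2 := by
    rw [Nat.choose_succ_succ' n 1, Nat.choose_one_right]
  simp only [confluentCoeff, qPoch_succ, hchoose, pow_add, pow_one, div_mul_div_comm]
  congr 1 <;> ring

theorem confluentCoeff_recurrence {q a b c u : ℝ} (hb : b ≠ 0) (hc : c ≠ 0) (hu : u ≠ 0) {n : ℕ}
    (hab : a / b * q ^ n ≠ 1) (hac : a / c * q ^ n ≠ 1) (hqn : q ^ (n + 1) ≠ 1) :
    confluentCoeff q a b c u (n + 1) *
        ((b - a * q ^ n) * (c - a * q ^ n) * (1 - q ^ (n + 1))) =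
      confluentCoeff q a b c u n * ((q ^ n - u) * q ^ n * a) := by
  have hden : (1 - a / b * q ^ n) * (1 - a / c * q ^ n) * (1 - q ^ (n + 1)) ≠ 0 :=
    mul_ne_zero (mul_ne_zero (sub_ne_zero.2 hab.symm) (sub_ne_zero.2 hac.symm))
      (sub_ne_zero.2 hqn.symm)
  have hfactor : (b - a * q ^ n) * (c - a * q ^ n) * (1 - q ^ (n + 1)) =
      (1 - a / b * q ^ n) * (1 - a / c * q ^ n) * (1 - q ^ (n + 1)) * (b * c) := by
    field_simp
  rw [confluentCoeff_succ, hfactor, mul_assoc, ← mul_assoc (_ / _), div_mul_cancel₀ _ hden]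
  field_simp
  ring

end Coefficients

section Parameters

variable {q : ℝ}

theorem rpow_mul_div_rpow_mul (hq : 0 < q) (r s t t' : ℝ) :
    q ^ r * t / (q ^ s * t') = q ^ (r - s) * t / t' := by
  rw [mul_div_mul_comm, ← Real.rpow_sub hq, mul_div_assoc]

theorem rpow_add_half_mul_div_rpow_sub_half_mul (hq : 0 < q) (h l t t' : ℝ) :
    q ^ (h + 1/2) * t / (q ^ (l - 1/2) * t') = q ^ (h - l + 1) * t / t' := by
  rw [rpow_mul_div_rpow_mul hq]
  ring_nf

theorem rpow_add_one_mul_pow (hq : 0 < q) (s : ℝ) (n : ℕ) :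
    q ^ (s + 1) * q ^ n = q ^ (s + ((n + 1 : ℕ) : ℝ)) := by
  rw [← Real.rpow_add_natCast hq.ne', add_assoc, Nat.cast_succ, add_comm (1 : ℝ)]

theorem pow_choose_two_eq_rpow (q : ℝ) (n : ℕ) :
    q ^ n.choose 2 = q ^ ((n : ℝ) * ((n : ℝ) - 1) / 2) := by
  rw [← Real.rpow_natCast, Nat.cast_choose_two]

theorem confEq21.congr {h₁ l₁ l₂ α₁ lam t₁ t₂ : ℝ} {f g : ℝ → ℝ} (hq : 0 < q)
    (hf : confEq21 q h₁ l₁ l₂ α₁ lam t₁ t₂ f) (hfg : ∀ x, 0 < x → f x = g x) :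
    confEq21 q h₁ l₁ l₂ α₁ lam t₁ t₂ g := by
  intro x hx
  rw [← hfg x hx, ← hfg (q * x) (mul_pos hq hx), ← hfg (x / q) (div_pos hx hq)]
  exact hf x hx

theorem confluentOp_rpow_apply (hq : 0 < q) {t₁ : ℝ} (ht₁ : t₁ ≠ 0) (h₁ l₁ l₂ t₂ u : ℝ)
    (f : ℝ → ℝ) (x : ℝ) :
    confluentOp q (q ^ (h₁ + 1/2) * t₁) (q ^ (l₁ - 1/2) * t₁) (q ^ (l₂ - 1/2) * t₂) u f x =
      (x - q ^ (l₁ - 1/2) * t₁) * (x - q ^ (l₂ - 1/2) * t₂) * f (q * x)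
        - q ^ (-h₁ + l₁ + l₂ - 1/2) * t₂ * (x - q ^ (h₁ + 1/2) * t₁) * f (x / q)
        - (u * x ^ 2
            - (q ^ (l₁ - 1/2) * t₁ + q ^ (l₂ - 1/2) * t₂ + q ^ (-h₁ + l₁ + l₂ - 1/2) * t₂) * x
            + q ^ (l₁ + l₂) * (1 + q⁻¹) * t₁ * t₂) * f x := by
  have hprod : q ^ (l₁ - 1/2) * q ^ (l₂ - 1/2) = q ^ (l₁ + l₂) / q := by
    rw [← Real.rpow_add hq, ← Real.rpow_sub_one hq.ne']
    ring_nf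
  have hratio : q * (q ^ (l₁ - 1/2) * t₁) * (q ^ (l₂ - 1/2) * t₂) / (q ^ (h₁ + 1/2) * t₁) =
      q ^ (-h₁ + l₁ + l₂ - 1/2) * t₂ := by
    have hexp : q ^ (l₁ + l₂) = q ^ (-h₁ + l₁ + l₂ - 1/2) * q ^ (h₁ + 1/2) := by
      rw [← Real.rpow_add hq]
      ring_nf
    rw [div_eq_iff (mul_ne_zero (Real.rpow_pos_of_pos hq _).ne' ht₁)]
    linear_combination (q * t₁ * t₂) * hprod + (t₁ * t₂) * hexp
      + (t₁ * t₂) * mul_div_cancel₀ (q ^ (l₁ + l₂)) hq.ne'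
  have hconst : q ^ (l₁ - 1/2) * t₁ * (q ^ (l₂ - 1/2) * t₂) * (1 + q) =
      q ^ (l₁ + l₂) * (1 + q⁻¹) * t₁ * t₂ := by
    rw [mul_mul_mul_comm, hprod]
    field_simp
    ring
  rw [confluentOp_apply, hratio, hconst]

theorem confEq21_rpow_mul_iff {h₁ l₁ l₂ α₁ lam t₁ t₂ : ℝ} (hq : 0 < q) (ht₁ : t₁ ≠ 0)
    (f : ℝ → ℝ) :
    confEq21 q h₁ l₁ l₂ α₁ lam t₁ t₂ (fun x => x ^ lam * f x) ↔
      ∀ x, 0 < x → confluentOp q (q ^ (h₁ + 1/2) * t₁) (q ^ (l₁ - 1/2) * t₁)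
        (q ^ (l₂ - 1/2) * t₂) (q ^ (-lam - α₁)) f x = 0 := by
  refine forall₂_congr fun x hx => ?_
  have hqlam : q ^ lam ≠ 0 := (Real.rpow_pos_of_pos hq lam).ne'
  have hxlam : x ^ lam ≠ 0 := (Real.rpow_pos_of_pos hx lam).ne'
  have hshift : q ^ (-h₁ + l₁ + l₂ + 2 * lam - 1/2) =
      q ^ lam * q ^ lam * q ^ (-h₁ + l₁ + l₂ - 1/2) := by
    simp only [← Real.rpow_add hq]
    ring_nf
  have hquad : q ^ (-α₁) = q ^ lam * q ^ (-lam - α₁) := by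
    rw [← Real.rpow_add hq]
    ring_nf
  have hlin : q ^ (l₁ + l₂ + lam - 1/2) * (q ^ (-l₂) * t₁ + (q ^ (-h₁) + q ^ (-l₁)) * t₂) =
      q ^ lam * (q ^ (l₁ - 1/2) * t₁ + q ^ (l₂ - 1/2) * t₂
        + q ^ (-h₁ + l₁ + l₂ - 1/2) * t₂) := by
    simp only [mul_add, add_mul, ← mul_assoc, ← Real.rpow_add hq]
    ring_nf
  refine Iff.trans (Eq.congr_left ?_) (mul_eq_zero_iff_left (mul_ne_zero hqlam hxlam))
  beta_reduce
  rw [confluentOp_rpow_apply hq ht₁, hshift, hquad, hlin, Real.rpow_add hq (l₁ + l₂) lam,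
    Real.mul_rpow hq.le hx.le, Real.div_rpow hx.le hq.le]
  field_simp

theorem confluentCoeff_mul_qShiftedPow {h₁ l₁ l₂ α₁ lam t₁ t₂ x : ℝ} (hq : 0 < q) (ht₁ : t₁ ≠ 0)
    (hx : x ≠ 0) (n : ℕ) :
    confluentCoeff q (q ^ (h₁ + 1/2) * t₁) (q ^ (l₁ - 1/2) * t₁) (q ^ (l₂ - 1/2) * t₂)
        (q ^ (-lam - α₁)) n * qShiftedPow q (q ^ (h₁ + 1/2) * t₁) n x =
      qPoch q (q ^ (h₁ + 1/2) * t₁ / x) n * qPoch q (q ^ (lam + α₁)) n *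
          q ^ ((n : ℝ) * ((n : ℝ) - 1) / 2) *
          (-(q ^ (-lam - α₁ - l₁ - l₂ + h₁ + 3/2) * x / t₂)) ^ n /
        (qPoch q (q ^ (h₁ - l₁ + 1)) n * qPoch q (q ^ (h₁ - l₂ + 1) * t₁ / t₂) n *
          qPoch q q n) := by
  have hbc : q ^ (-lam - α₁) * (q ^ (h₁ + 1/2) * t₁) /
      (q ^ (l₁ - 1/2) * t₁ * (q ^ (l₂ - 1/2) * t₂)) =
        q ^ (-lam - α₁ - l₁ - l₂ + h₁ + 3/2) / t₂ := by
    rw [← mul_assoc, ← Real.rpow_add hq, mul_mul_mul_comm, ← Real.rpow_add hq,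
      rpow_mul_div_rpow_mul hq, mul_comm t₁, mul_div_mul_right _ _ ht₁]
    ring_nf
  have hu : (q ^ (-lam - α₁))⁻¹ = q ^ (lam + α₁) := by
    rw [← Real.rpow_neg hq.le]
    ring_nf
  rw [confluentCoeff, hbc, rpow_add_half_mul_div_rpow_sub_half_mul hq,
    rpow_add_half_mul_div_rpow_sub_half_mul hq, mul_div_cancel_right₀ _ ht₁, hu,
    pow_choose_two_eq_rpow, ← qPoch_div_mul_pow _ _ _ hx, mul_div_right_comm _ x t₂, ← neg_mul,
    mul_pow]
  ring

theorem confluentCoeff_rpow_recurrence {h₁ l₁ l₂ t₁ t₂ u : ℝ} (hq : 0 < q) (hq1 : q ≠ 1)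
    (ht₁ : t₁ ≠ 0) (ht₂ : t₂ ≠ 0) (hu : u ≠ 0) {n : ℕ}
    (hab : q ^ (h₁ - l₁ + ((n + 1 : ℕ) : ℝ)) ≠ 1)
    (hac : q ^ (h₁ - l₂ + ((n + 1 : ℕ) : ℝ)) * t₁ / t₂ ≠ 1) :
    let a := q ^ (h₁ + 1/2) * t₁
    let b := q ^ (l₁ - 1/2) * t₁
    let c := q ^ (l₂ - 1/2) * t₂
    confluentCoeff q a b c u (n + 1) *
        ((b - a * q ^ n) * (c - a * q ^ n) * (1 - q ^ (n + 1))) =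
      confluentCoeff q a b c u n * ((q ^ n - u) * q ^ n * a) := by
  have hpos (s : ℝ) : q ^ s ≠ 0 := (Real.rpow_pos_of_pos hq s).ne'
  refine confluentCoeff_recurrence (mul_ne_zero (hpos _) ht₁) (mul_ne_zero (hpos _) ht₂) hu ?_ ?_ ?_
  · rwa [rpow_add_half_mul_div_rpow_sub_half_mul hq, mul_div_cancel_right₀ _ ht₁,
      rpow_add_one_mul_pow hq]
  · rwa [rpow_add_half_mul_div_rpow_sub_half_mul hq, div_mul_eq_mul_div, mul_right_comm,
      rpow_add_one_mul_pow hq]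
  · rwa [Ne, pow_eq_one_iff_of_nonneg hq.le n.succ_ne_zero]

end Parameters

theorem stmt14 (q h₁ l₁ l₂ α₁ lam t₁ t₂ : ℝ) (N : ℕ)
    (hq : 0 < q) (hq1 : q ≠ 1) (ht₁ : t₁ ≠ 0) (ht₂ : t₂ ≠ 0)
    (hN : 0 < N) (hNlam : lam + α₁ = -(N : ℝ))
    (hden : ∀ n : ℕ, 1 ≤ n → n ≤ N →
      q ^ (h₁ - l₁ + (n : ℝ)) ≠ 1 ∧ q ^ (h₁ - l₂ + (n : ℝ)) * t₁ / t₂ ≠ 1) :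
    confEq21 q h₁ l₁ l₂ α₁ lam t₁ t₂ (fun x =>
      x ^ lam * ∑ n ∈ Finset.range (N + 1),
        qPoch q (q ^ (h₁ + 1/2) * t₁ / x) n * qPoch q (q ^ (lam + α₁)) n *
            q ^ ((n : ℝ) * ((n : ℝ) - 1) / 2) *
            (-(q ^ (-lam - α₁ - l₁ - l₂ + h₁ + 3/2) * x / t₂)) ^ n /
          (qPoch q (q ^ (h₁ - l₁ + 1)) n * qPoch q (q ^ (h₁ - l₂ + 1) * t₁ / t₂) n *
            qPoch q q n)) := by
  have ha : q ^ (h₁ + 1/2) * t₁ ≠ 0 := mul_ne_zero (Real.rpow_pos_of_pos hq _).ne' ht₁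
  have hu : q ^ (-lam - α₁) = q ^ N := by
    rw [← Real.rpow_natCast, ← neg_add', hNlam, neg_neg]
  have hrec (n : ℕ) (hn : n < N) :=
    confluentCoeff_rpow_recurrence hq hq1 ht₁ ht₂ (Real.rpow_pos_of_pos hq (-lam - α₁)).ne'
      (hden (n + 1) n.succ_pos hn).1 (hden (n + 1) n.succ_pos hn).2
  have hsol := (confEq21_rpow_mul_iff hq ht₁ _).2 fun x _ =>
    (confluentOp_sum_smul_qShiftedPow hq.ne' ha hrec x).trans (by
      rw [hu, sub_self, mul_zero, zero_mul, zero_mul])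
  refine hsol.congr hq fun x hx => ?_
  simp only [Finset.sum_apply, Pi.smul_apply, smul_eq_mul,
    confluentCoeff_mul_qShiftedPow hq ht₁ hx.ne']
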